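/- Let N₁ : ℝ → ℝ satisfy N₁(G) ≥ 2 for all large G and ∫₂^{N₁(G)} (−P(t)) dt = a·G + O(1) as G → ∞. Let g : ℝ → ℝ satisfy (i) g(T) − T ∼ (1−c)·T/ln T as T → ∞, and (ii) for every fixed l > 0, ∫_{g(T)}^{g(T+2l)} |ζ(1/2+it)|² dt = (1+o(1))·2l·ln T as T → ∞. Then for every fixed x > 0, lim_{τ→∞} (1/τ)·{ [∫_{N₁(xτ)}^{N₁(g(xτ))} (−P(t)) dt] · [∫_{g(xτ)}^{g(xτ + 1/(a(1−c)))} |ζ(1/2+it)|² dt] } = x. -/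

import Mathlib

/-!
Put `T = x τ`. Since `-P` is integrable on bounded subintervals of `[2, ∞)`, the first integral is
the difference of two integrals from `2`, so the hypothesis on `N₁` makes it
`a (g T - T) + O(1)`; by the asymptotics of `g T - T` this is `∼ a (1 - c) T / log T`
(`tendsto_first_factor`). Taking `2 l = 1 / (a (1 - c))`, which is positive because `c < 2/3`, the
second integral is `∼ log T / (a (1 - c))`. The product is therefore `∼ T = x τ`.
-/


open Filter Real Asymptotics MeasureTheory

noncomputable def pichar (t : ℝ) : ℝ := (Nat.primeCounting ⌊t⌋₊ : ℝ)

noncomputable def P (t : ℝ) : ℝ := pichar t - ∫ u in (2:ℝ)..t, 1 / Real.log u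

noncomputable def a : ℝ := Real.exp 4.5

noncomputable def c : ℝ := Real.eulerMascheroniConstant

noncomputable def Z (t : ℝ) : ℝ := ‖riemannZeta (1/2 + (t : ℂ) * Complex.I)‖ ^ 2

/-- On `[2, ∞)` the function `P` is a difference of two monotone functions, hence integrable on
bounded intervals. -/
lemma intervalIntegrable_neg_P {M : ℝ} (hM : 2 ≤ M) :
    IntervalIntegrable (fun t => -P t) volume 2 M := by
  have hlogint : ∀ s t : ℝ, 2 ≤ s → 2 ≤ t →
      IntervalIntegrable (fun u : ℝ => 1 / Real.log u) volume s t := by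
    intro s t hs ht
    apply ContinuousOn.intervalIntegrable
    intro u hu
    have hu2 : 2 ≤ u := le_trans (le_min hs ht) hu.1
    have hlog : Real.log u ≠ 0 := (Real.log_pos (by linarith)).ne'
    exact (continuousAt_const.div (Real.continuousAt_log (by linarith)) hlog).continuousWithinAt
  have hpi : IntervalIntegrable pichar volume 2 M := by
    apply Monotone.intervalIntegrable
    intro s t hst
    exact Nat.cast_le.mpr (Nat.monotone_primeCounting (Nat.floor_mono hst))
  have hli : IntervalIntegrable (fun t => ∫ u in (2:ℝ)..t, 1 / Real.log u) volume 2 M := by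
    apply MonotoneOn.intervalIntegrable
    rw [Set.uIcc_of_le hM]
    intro s hs t ht hst
    have hadd := intervalIntegral.integral_add_adjacent_intervals
      (hlogint 2 s le_rfl hs.1) (hlogint s t hs.1 ht.1)
    have hnn : 0 ≤ ∫ u in s..t, 1 / Real.log u := by
      apply intervalIntegral.integral_nonneg hst
      intro u hu
      exact one_div_nonneg.mpr (Real.log_nonneg (by linarith [hs.1, hu.1]))
    show (∫ u in (2:ℝ)..s, 1 / Real.log u) ≤ ∫ u in (2:ℝ)..t, 1 / Real.log u
    linarith
  exact (hpi.sub hli).neg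

lemma tendsto_log_div_self : Tendsto (fun T : ℝ => Real.log T / T) atTop (nhds 0) :=
  Real.isLittleO_log_id_atTop.tendsto_div_nhds_zero

lemma one_sub_c_pos : 0 < 1 - c := by
  have := Real.eulerMascheroniConstant_lt_two_thirds
  unfold c
  linarith

lemma tendsto_ratio {g : ℝ → ℝ}
    (hg1 : (fun T => g T - T) ~[atTop] (fun T => (1 - c) * T / Real.log T)) :
    Tendsto (fun T => (g T - T) * (Real.log T / T)) atTop (nhds (1 - c)) := by
  have hc := one_sub_c_pos
  have hne : ∀ᶠ T : ℝ in atTop, (1 - c) * T / Real.log T ≠ 0 := by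
    filter_upwards [eventually_gt_atTop 1] with T hT
    have := Real.log_pos hT
    positivity
  have h := ((isEquivalent_iff_tendsto_one hne).mp hg1).const_mul (1 - c)
  rw [mul_one] at h
  refine h.congr' ?_
  filter_upwards [eventually_gt_atTop 1] with T hT
  have := Real.log_pos hT
  simp only [Pi.div_apply]
  field_simp

lemma tendsto_g_atTop {g : ℝ → ℝ}
    (hg1 : (fun T => g T - T) ~[atTop] (fun T => (1 - c) * T / Real.log T)) :
    Tendsto g atTop atTop := by
  refine tendsto_atTop_mono' atTop ?_ tendsto_id
  filter_upwards [(tendsto_ratio hg1).eventually (lt_mem_nhds one_sub_c_pos),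
    eventually_gt_atTop 1] with T h hT
  have hq : 0 < Real.log T / T := div_pos (Real.log_pos hT) (by linarith)
  have := pos_of_mul_pos_left h hq.le
  simp only [id]
  linarith

/-- The first integral is `∼ a (1 - c) T / log T`: the bounded errors at `T` and at `g T` are
negligible after multiplication by `log T / T`. -/
lemma tendsto_first_factor {N₁ g : ℝ → ℝ}
    (hN2 : ∀ᶠ G in atTop, 2 ≤ N₁ G)
    (hN : (fun G => (∫ t in (2:ℝ)..N₁ G, -P t) - a * G) =O[atTop] (fun _ => (1:ℝ)))
    (hg1 : (fun T => g T - T) ~[atTop] (fun T => (1 - c) * T / Real.log T)) :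
    Tendsto (fun T => (∫ t in N₁ T..N₁ (g T), -P t) * (Real.log T / T)) atTop
      (nhds (a * (1 - c))) := by
  have hg := tendsto_g_atTop hg1
  have herr := ((hN.comp_tendsto hg).sub hN).mul (isBigO_refl (fun T : ℝ => Real.log T / T) atTop)
  have herr0 := herr.trans_tendsto (by simpa using tendsto_log_div_self)
  have h := ((tendsto_ratio hg1).const_mul a).add herr0
  rw [add_zero] at h
  refine h.congr' ?_
  filter_upwards [hN2, hg.eventually hN2] with T h1 h2
  rw [← intervalIntegral.integral_interval_sub_left (intervalIntegrable_neg_P h2)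
    (intervalIntegrable_neg_P h1)]
  simp only [Function.comp_apply]
  ring

/-- Theorem 2: the first `Pζ`-functional attains the value `x` for every fixed `x > 0`. -/
theorem stmt_7 (N₁ : ℝ → ℝ)
    (hN2 : ∀ᶠ G in atTop, 2 ≤ N₁ G)
    (hN : (fun G => (∫ t in (2:ℝ)..N₁ G, -P t) - a * G) =O[atTop] (fun _ => (1:ℝ)))
    (g : ℝ → ℝ)
    (hg1 : (fun T => g T - T) ~[atTop] (fun T => (1 - c) * T / Real.log T))
    (hg2 : ∀ l : ℝ, 0 < l →
      (fun T => ∫ t in g T..g (T + 2 * l), Z t) ~[atTop] (fun T => 2 * l * Real.log T))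
    (x : ℝ) (hx : 0 < x) :
    Tendsto (fun τ => (1 / τ) *
      ((∫ t in N₁ (x * τ)..N₁ (g (x * τ)), -P t) *
        ∫ t in g (x * τ)..g (x * τ + 1 / (a * (1 - c))), Z t))
      atTop (nhds x) := by
  have hk : 0 < a * (1 - c) := mul_pos (Real.exp_pos _) one_sub_c_pos
  have hZ := hg2 (1 / (a * (1 - c)) / 2) (by positivity)
  rw [mul_div_cancel₀ _ (two_ne_zero' ℝ)] at hZ
  have hne : ∀ᶠ T : ℝ in atTop, 1 / (a * (1 - c)) * Real.log T ≠ 0 := by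
    filter_upwards [eventually_gt_atTop 1] with T hT
    have := Real.log_pos hT
    positivity
  have hprod := (tendsto_first_factor hN2 hN hg1).mul ((isEquivalent_iff_tendsto_one hne).mp hZ)
  have hτ : Tendsto (fun τ : ℝ => x * τ) atTop atTop := tendsto_id.const_mul_atTop hx
  have h := (hprod.comp hτ).const_mul (x / (a * (1 - c)))
  rw [mul_one, div_mul_cancel₀ _ hk.ne'] at h
  refine h.congr' ?_
  filter_upwards [hτ.eventually (eventually_gt_atTop 1), eventually_gt_atTop 0] with τ hT hτ0
  have hlog := Real.log_pos hT
  simp only [Function.comp_apply, Pi.div_apply]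
  generalize (∫ t in N₁ (x * τ)..N₁ (g (x * τ)), -P t) = A
  generalize (∫ t in g (x * τ)..g (x * τ + 1 / (a * (1 - c))), Z t) = B
  generalize Real.log (x * τ) = L at *
  generalize a * (1 - c) = k at *
  field_simp
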